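/- arXiv:2602.12958 — 9 statements merged into one kernel-verified Lean document; each statement's English description precedes it below -/
import Mathlib

section
/- Let N ≥ 1, let x_A ∈ ℝ^N have all coordinates strictly positive, and let F : ℝ^N → ℝ be differentiable at x_A with ∇F(x_A) ≠ 0. Suppose p ∈ ℝ^N with ‖p‖₂ = 1 is such that x_A maximizes F over the set {x ∈ ℝ^N : x ≥ 0 and ⟨p, x⟩ ≤ ⟨p, x_A⟩}. Then p = ∇F(x_A)/‖∇F(x_A)‖₂. In particular, the unit-norm supporting price vector at an interior autarky optimum is unique. -/
/-!
The budget set contains `xA + t • v` for all small `t > 0` whenever `⟪p, v⟫ ≤ 0`, because `xA` is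
interior to the positive orthant; hence the first-order condition `⟪gF, v⟫ ≤ 0` holds for every such
`v`. By Cauchy–Schwarz `v = gF - ‖gF‖ • p` is admissible, and then
`‖v‖² = 2 ⟪gF, v⟫ ≤ 0` forces `gF = ‖gF‖ • p`.
-/

open scoped InnerProductSpace

/-- Uniqueness of the unit-norm supporting price at an interior
autarky optimum.  If `x_A` has strictly positive coordinates, `F` is
differentiable at `x_A` with nonzero gradient, and the unit vector `p` is such
that `x_A` maximizes `F` over the budget half-space
`{x : x ≥ 0 ∧ ⟪p, x⟫ ≤ ⟪p, x_A⟫}`, then `p = ∇F(x_A) / ‖∇F(x_A)‖`. -/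
theorem stmt_2 (N : ℕ) (hN : 1 ≤ N)
    (xA : EuclideanSpace ℝ (Fin N)) (hxA : ∀ i, 0 < xA i)
    (F : EuclideanSpace ℝ (Fin N) → ℝ)
    (gF : EuclideanSpace ℝ (Fin N)) (hgF : HasGradientAt F gF xA) (hgF0 : gF ≠ 0)
    (p : EuclideanSpace ℝ (Fin N)) (hp : ‖p‖ = 1)
    (hmax : ∀ x : EuclideanSpace ℝ (Fin N), (∀ i, 0 ≤ x i) →
      ⟪p, x⟫_ℝ ≤ ⟪p, xA⟫_ℝ → F x ≤ F xA) :
    p = ‖gF‖⁻¹ • gF := by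
  have key : ∀ v : EuclideanSpace ℝ (Fin N), ⟪p, v⟫_ℝ ≤ 0 → ⟪gF, v⟫_ℝ ≤ 0 := by
    intro v hv
    let S : Set (EuclideanSpace ℝ (Fin N)) := {x | (∀ i, 0 ≤ x i) ∧ ⟪p, x⟫_ℝ ≤ ⟪p, xA⟫_ℝ}
    have hloc : IsLocalMaxOn F S xA :=
      IsMaxOn.localize fun x hx => hmax x hx.1 hx.2
    have hev : ∀ᶠ t : ℝ in nhdsWithin 0 (Set.Ioi 0), xA + t • v ∈ S := by
      have hpos : ∀ᶠ t : ℝ in nhdsWithin 0 (Set.Ioi 0), ∀ i, 0 < (xA + t • v) i := by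
        refine Filter.eventually_all.2 fun i => Filter.Eventually.filter_mono nhdsWithin_le_nhds ?_
        have hc : Continuous fun t : ℝ => (xA + t • v) i := by
          simp only [PiLp.add_apply, PiLp.smul_apply]
          fun_prop
        exact hc.continuousAt.eventually (lt_mem_nhds (by simpa using hxA i))
      filter_upwards [hpos, self_mem_nhdsWithin] with t ht ht0
      refine ⟨fun i => (ht i).le, ?_⟩
      rw [inner_add_right, inner_smul_right]
      have := mul_nonpos_of_nonneg_of_nonpos (le_of_lt ht0) hv
      linarith
    have h := hloc.hasFDerivWithinAt_nonpos hgF.hasFDerivAt.hasFDerivWithinAt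
      (mem_posTangentConeAt_of_frequently_mem hev.frequently)
    simpa using h
  have hg : ‖gF‖ ≠ 0 := norm_ne_zero_iff.2 hgF0
  have h1 : ⟪gF, gF - ‖gF‖ • p⟫_ℝ ≤ 0 := by
    apply key
    have := real_inner_le_norm p gF
    rw [inner_sub_right, inner_smul_right, real_inner_self_eq_norm_sq, hp]
    rw [hp] at this
    linarith
  have h2 : ‖gF - ‖gF‖ • p‖ ^ 2 ≤ 0 := by
    rw [inner_sub_right, inner_smul_right, real_inner_self_eq_norm_sq] at h1
    rw [norm_sub_sq_real, inner_smul_right, norm_smul, norm_norm, hp]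
    linarith
  have h3 : gF = ‖gF‖ • p := by
    rw [← sub_eq_zero, ← norm_eq_zero]
    exact pow_eq_zero_iff two_ne_zero |>.1 (le_antisymm h2 (sq_nonneg _))
  rw [eq_inv_smul_iff₀ hg]
  exact h3.symm
end

section
/- Let N ≥ 1, B > 0, χ ≥ 0, and let t ∈ ℝ^N with t ≥ 0. Let g : ℝ^N → ℝ be convex, positively homogeneous of degree one (g(c·x) = c·g(x) for all c ≥ 0 and all x), with g(x) > 0 for every x ≥ 0 with x ≠ 0. Set y = B·χ·t, X_A = {x ∈ ℝ^N : x ≥ 0 and g(x) ≤ B}, and define X_T = {z ∈ ℝ^N : z ≥ 0 and there exist x_H ≥ 0 and λ ∈ [0,1] with z ≤ x_H + λ·y and g(x_H) ≤ (1−λ)·B}. Then X_T equals the free-disposal closure of the convex hull of X_A ∪ {y}. -/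
/-! The autarky set `X_A = {x ≥ 0 : g x ≤ B}` is convex and contains `0`, so the convex hull of
`X_A ∪ {y}` is the union of the segments joining `y` to points of `X_A`. By homogeneity,
`xH = (1 - λ) x` with `x ∈ X_A` satisfies `g xH ≤ (1 - λ) B`, and conversely every `xH ≥ 0` with
`g xH ≤ (1 - λ) B` has this form: divide by `1 - λ` if `λ < 1`, while `λ = 1` forces `g xH ≤ 0`,
hence `xH = 0` by positivity of `g`. So both sets are the free-disposal closure of the points
`λ y + (1 - λ) x`. -/

/-- Technology expands the production possibility set to the
free-disposal closure of the convex hull of the autarky PPS `X_A` and the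
technology point `y = B·χ·t`. -/
theorem stmt_3 (N : ℕ) (hN : 1 ≤ N) (B χ : ℝ) (hB : 0 < B) (hχ : 0 ≤ χ)
    (t : Fin N → ℝ) (ht : ∀ i, 0 ≤ t i)
    (g : (Fin N → ℝ) → ℝ)
    (hg_conv : ConvexOn ℝ Set.univ g)
    (hg_hom : ∀ c : ℝ, 0 ≤ c → ∀ x : Fin N → ℝ, g (c • x) = c * g x)
    (hg_pos : ∀ x : Fin N → ℝ, (∀ i, 0 ≤ x i) → x ≠ 0 → 0 < g x) :
    {z : Fin N → ℝ | (∀ i, 0 ≤ z i) ∧ ∃ (xH : Fin N → ℝ) (lam : ℝ),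
        (∀ i, 0 ≤ xH i) ∧ 0 ≤ lam ∧ lam ≤ 1 ∧
        (∀ i, z i ≤ xH i + lam * (B * χ * t i)) ∧ g xH ≤ (1 - lam) * B}
    = {z : Fin N → ℝ | (∀ i, 0 ≤ z i) ∧ ∃ w ∈ convexHull ℝ
        ({x : Fin N → ℝ | (∀ i, 0 ≤ x i) ∧ g x ≤ B} ∪ {(B * χ) • t}),
        ∀ i, z i ≤ w i} := by
  set XA : Set (Fin N → ℝ) := {x : Fin N → ℝ | (∀ i, 0 ≤ x i) ∧ g x ≤ B} with hXA
  have hg0 : g 0 = 0 := by simpa using hg_hom 0 le_rfl 0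
  have h0 : (0 : Fin N → ℝ) ∈ XA := ⟨fun _ => le_rfl, by rw [hg0]; exact hB.le⟩
  have hconv : Convex ℝ XA := by
    have h := (convex_Ici (𝕜 := ℝ) (0 : Fin N → ℝ)).inter (hg_conv.convex_le B)
    have he : XA = Set.Ici 0 ∩ {x | x ∈ Set.univ ∧ g x ≤ B} := by
      ext x
      simp [hXA, Pi.le_def]
    rwa [he]
  ext z
  refine and_congr_right fun _ => ?_
  rw [Set.union_singleton, convexHull_insert ⟨0, h0⟩, hconv.convexHull_eq]
  constructor
  · rintro ⟨xH, lam, hx, hl0, hl1, hz, hgx⟩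
    obtain ⟨x, hxA, rfl⟩ : ∃ x ∈ XA, xH = (1 - lam) • x := by
      rcases hl1.lt_or_eq with hl | rfl
      · have hpos : 0 < 1 - lam := sub_pos.2 hl
        refine ⟨(1 - lam)⁻¹ • xH, ⟨fun i => mul_nonneg (inv_nonneg.2 hpos.le) (hx i), ?_⟩,
          (smul_inv_smul₀ hpos.ne' xH).symm⟩
        rw [hg_hom _ (inv_nonneg.2 hpos.le)]
        exact (inv_mul_le_iff₀ hpos).2 hgx
      · refine ⟨0, h0, ?_⟩
        by_contra hne
        have := hg_pos xH hx (by simpa using hne)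
        linarith
    refine ⟨lam • ((B * χ) • t) + (1 - lam) • x, ?_, fun i => ?_⟩
    · exact mem_convexJoin.2 ⟨_, rfl, x, hxA,
        lam, 1 - lam, hl0, sub_nonneg.2 hl1, by ring, rfl⟩
    · have := hz i
      simp only [Pi.add_apply, Pi.smul_apply, smul_eq_mul] at this ⊢
      linarith
  · rintro ⟨w, hw, hzw⟩
    obtain ⟨_, rfl, x, hxA, a, b, ha, hb, hab, rfl⟩ := mem_convexJoin.1 hw
    obtain rfl : b = 1 - a := by linarith
    refine ⟨(1 - a) • x, a, fun i => mul_nonneg hb (hxA.1 i), ha, by linarith, fun i => ?_, ?_⟩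
    · have := hzw i
      simp only [Pi.add_apply, Pi.smul_apply, smul_eq_mul] at this ⊢
      linarith
    · rw [hg_hom _ hb]
      exact mul_le_mul_of_nonneg_left hxA.2 hb
end

section
/- Let N ≥ 1, let X_A ⊆ ℝ^N be convex, let F : ℝ^N → ℝ be concave and differentiable, and suppose x_A ∈ X_A maximizes F over X_A. Let y ∈ ℝ^N. Then sup{F(z) : z ∈ conv(X_A ∪ {y})} > F(x_A) if and only if ⟨∇F(x_A), y⟩ > ⟨∇F(x_A), x_A⟩. That is, the worker strictly gains from access to the technology point y exactly when y lies on the strictly profitable side of the supporting hyperplane at the autarky optimum, whose normal is the autarky shadow price ∇F(x_A). -/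
/-!
Write `g = ∇F(x_A)`. If `⟪g, w - x_A⟫ > 0`, then `F` strictly increases when moving slightly from
`x_A` towards `w` (`exists_lt_on_segment`). With `w = y` this produces a point of the hull with
higher output. With `w ∈ X_A` it contradicts optimality of `x_A`, so `X_A` lies in the half-space
`⟪g, ·⟫ ≤ ⟪g, x_A⟫`. If `y` lies there too, so does the whole hull, and a concave function lies
below its tangent plane at `x_A` (`le_tangent_of_concaveOn`), so `F ≤ F x_A` on the hull.
-/

open scoped InnerProductSpace

lemma exists_lt_of_hasDerivAt_pos {f : ℝ → ℝ} {d : ℝ} (hf : HasDerivAt f d 0) (hd : 0 < d) :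
    ∃ t : ℝ, 0 < t ∧ t ≤ 1 ∧ f 0 < f t := by
  have h1 : ∀ᶠ t in nhdsWithin (0 : ℝ) (Set.Ioi 0), 0 < t⁻¹ • (f (0 + t) - f 0) :=
    hf.tendsto_slope_zero_right.eventually (lt_mem_nhds hd)
  obtain ⟨t, ht, ht0, ht1⟩ :=
    (h1.and (Ioc_mem_nhdsGT (zero_lt_one : (0 : ℝ) < 1))).exists
  refine ⟨t, ht0, ht1, ?_⟩
  rw [zero_add, smul_eq_mul] at ht
  exact sub_pos.1 ((mul_pos_iff_of_pos_left (inv_pos.2 ht0)).1 ht)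

section

variable {E : Type*} [NormedAddCommGroup E] [InnerProductSpace ℝ E] [CompleteSpace E]
  {F : E → ℝ} {g x : E}

lemma hasDerivAt_along_line (hF : HasGradientAt F g x) (v : E) :
    HasDerivAt (fun t : ℝ => F (x + t • v)) ⟪g, v⟫_ℝ 0 := by
  have h := hF.hasFDerivAt.hasLineDerivAt v
  simpa [HasLineDerivAt] using h

lemma exists_lt_on_segment (hF : HasGradientAt F g x) {w : E} (hw : ⟪g, x⟫_ℝ < ⟪g, w⟫_ℝ) :
    ∃ t : ℝ, 0 < t ∧ t ≤ 1 ∧ F x < F (x + t • (w - x)) := by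
  have h := exists_lt_of_hasDerivAt_pos (hasDerivAt_along_line hF (w - x))
    (by rw [inner_sub_right]; exact sub_pos.2 hw)
  simpa using h

/-- A concave function lies below its tangent plane. Otherwise, along the segment from `x` to `z`,
the chord minus the function would have positive derivative at `x`, hence become positive. -/
lemma le_tangent_of_concaveOn (hc : ConcaveOn ℝ Set.univ F) (hF : HasGradientAt F g x) (z : E) :
    F z ≤ F x + ⟪g, z - x⟫_ℝ := by
  by_contra! hlt
  have hd : HasDerivAt (fun t : ℝ => t * (F z - F x) - F (x + t • (z - x)))
      (1 * (F z - F x) - ⟪g, z - x⟫_ℝ) 0 :=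
    ((hasDerivAt_id (0 : ℝ)).mul_const _).sub (hasDerivAt_along_line hF (z - x))
  obtain ⟨t, ht0, ht1, ht⟩ := exists_lt_of_hasDerivAt_pos hd (by linarith)
  have hch := hc.2 (Set.mem_univ x) (Set.mem_univ z) (sub_nonneg.2 ht1) ht0.le
    (sub_add_cancel 1 t)
  have heq : (1 - t) • x + t • z = x + t • (z - x) := by module
  rw [heq, smul_eq_mul, smul_eq_mul] at hch
  simp only [zero_mul, zero_smul, add_zero] at ht
  linarith

end

/-- Technology adoption condition.  Given a convex autarky set
`X_A`, a concave differentiable output `F` maximized over `X_A` at `x_A`, and a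
technology point `y`, the worker strictly gains from access to `y` — that is,
`sup {F z : z ∈ conv(X_A ∪ {y})} > F x_A`, equivalently some point of the hull
gives strictly higher output — iff `⟪∇F(x_A), y⟫ > ⟪∇F(x_A), x_A⟫`. -/
theorem stmt_5 (N : ℕ) (hN : 1 ≤ N)
    (X_A : Set (EuclideanSpace ℝ (Fin N))) (hX : Convex ℝ X_A)
    (F : EuclideanSpace ℝ (Fin N) → ℝ)
    (hconc : ConcaveOn ℝ Set.univ F) (hdiff : Differentiable ℝ F)
    (xA : EuclideanSpace ℝ (Fin N)) (hxA : xA ∈ X_A)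
    (hmax : ∀ x ∈ X_A, F x ≤ F xA)
    (gF : EuclideanSpace ℝ (Fin N)) (hgF : HasGradientAt F gF xA)
    (y : EuclideanSpace ℝ (Fin N)) :
    (∃ z ∈ convexHull ℝ (X_A ∪ {y}), F xA < F z) ↔ ⟪gF, xA⟫_ℝ < ⟪gF, y⟫_ℝ := by
  constructor
  · rintro ⟨z, hz, hFz⟩
    by_contra! hy
    have hsub : X_A ∪ {y} ⊆ {w | ⟪gF, w⟫_ℝ ≤ ⟪gF, xA⟫_ℝ} := by
      rintro w (hw | rfl)
      · rw [Set.mem_ofPred_eq]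
        by_contra! hlt
        obtain ⟨t, ht0, ht1, ht⟩ := exists_lt_on_segment hgF hlt
        exact ht.not_ge (hmax _ (hX.add_smul_sub_mem hxA hw ⟨ht0.le, ht1⟩))
      · exact hy
    have hhalf : Convex ℝ {w | ⟪gF, w⟫_ℝ ≤ ⟪gF, xA⟫_ℝ} :=
      convex_halfSpace_le (innerₛₗ ℝ gF).isLinear _
    have hzle : ⟪gF, z⟫_ℝ ≤ ⟪gF, xA⟫_ℝ := convexHull_min hsub hhalf hz
    have htan := le_tangent_of_concaveOn hconc hgF z
    rw [inner_sub_right] at htan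
    linarith
  · intro hlt
    obtain ⟨t, ht0, ht1, ht⟩ := exists_lt_on_segment hgF hlt
    exact ⟨_, (convex_convexHull ℝ (X_A ∪ {y})).add_smul_sub_mem (subset_convexHull ℝ _ (Or.inl hxA))
      (subset_convexHull ℝ _ (Or.inr rfl)) ⟨ht0.le, ht1⟩, ht⟩
end

section
/- Let N ≥ 1, B > 0, χ > 0, and let t ∈ ℝ^N with t ≥ 0. Let F be concave on the nonnegative orthant of ℝ^N, positively homogeneous of degree one (F(c·x) = c·F(x) for all c ≥ 0 and all x ≥ 0), and differentiable at t with F(t) > 0. Let X_A be a convex compact subset of the nonnegative orthant, and set y = B·χ·t. Then y maximizes F over conv(X_A ∪ {y}) if and only if B·χ·F(t) ≥ max{⟨∇F(t), x⟩ : x ∈ X_A}. Consequently the all-in capability threshold is χ₁₀₀ = max{⟨∇F(t), x⟩ : x ∈ X_A} / (B·F(t)): the worker goes all in on the technology exactly when χ ≥ χ₁₀₀. -/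
open scoped InnerProductSpace

/-!
Write `g = ∇F(t)`. Homogeneity gives Euler's identity `⟪g, t⟫ = F t`, and concavity makes the
tangent at `t` a global upper bound on the orthant, so together `F x ≤ ⟪g, x⟫` for all `x ≥ 0`
(`le_inner_gradient`). If `⟪g, ·⟫ ≤ B * χ * F t = F y` on `X_A`, the same bound holds on the convex
hull, hence `F ≤ F y` there. Conversely, if `y` is a maximizer, then moving from `y` towards any
`x ∈ X_A` does not increase `F`; rescaled by homogeneity to a displacement from `t`, this says that
a directional derivative at `t` is nonpositive, which is `⟪g, x⟫ ≤ B * χ * F t`.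
Euler's identity, the tangent bound and the converse each compare one-sided difference quotients at
`t` with `g` (`inner_le_of_forall_le`, `le_inner_of_forall_le`).
-/

section Gradient

variable {E : Type*} [NormedAddCommGroup E] [InnerProductSpace ℝ E] [CompleteSpace E]

lemma tendsto_quotient_of_hasGradientAt {F : E → ℝ} {g t : E} (h : HasGradientAt F g t) (v : E) :
    Filter.Tendsto (fun s : ℝ => s⁻¹ * (F (t + s • v) - F t)) (nhdsWithin 0 (Set.Ioi 0))
      (nhds ⟪g, v⟫_ℝ) := by
  have h1 : HasDerivAt (fun s : ℝ => F (t + s • v)) ⟪g, v⟫_ℝ 0 :=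
    h.hasFDerivAt.hasLineDerivAt v
  simpa using h1.tendsto_slope_zero_right

/-- A linear upper bound on `F` along a short segment leaving `t` bounds the directional derivative
at `t`. -/
lemma inner_le_of_forall_le {F : E → ℝ} {g t : E} (h : HasGradientAt F g t) (v : E) (a : ℝ)
    (H : ∀ s : ℝ, 0 < s → s < 1 → F (t + s • v) ≤ F t + s * a) : ⟪g, v⟫_ℝ ≤ a := by
  refine le_of_tendsto (tendsto_quotient_of_hasGradientAt h v) ?_
  filter_upwards [Ioo_mem_nhdsGT (zero_lt_one (α := ℝ))] with s hs
  rw [inv_mul_le_iff₀ hs.1]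
  linarith [H s hs.1 hs.2]

lemma le_inner_of_forall_le {F : E → ℝ} {g t : E} (h : HasGradientAt F g t) (v : E) (a : ℝ)
    (H : ∀ s : ℝ, 0 < s → s < 1 → F t + s * a ≤ F (t + s • v)) : a ≤ ⟪g, v⟫_ℝ := by
  refine ge_of_tendsto (tendsto_quotient_of_hasGradientAt h v) ?_
  filter_upwards [Ioo_mem_nhdsGT (zero_lt_one (α := ℝ))] with s hs
  rw [le_inv_mul_iff₀ hs.1]
  linarith [H s hs.1 hs.2]

/-- Euler's identity for a function homogeneous of degree one along the ray through `t`. -/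
lemma inner_gradient_self {F : E → ℝ} {g t : E} (h : HasGradientAt F g t)
    (hhom : ∀ c : ℝ, 0 ≤ c → F (c • t) = c * F t) : ⟪g, t⟫_ℝ = F t := by
  have key : ∀ s : ℝ, 0 < s → F (t + s • t) = F t + s * F t := fun s hs => by
    rw [show t + s • t = (1 + s) • t by module, hhom _ (by linarith)]
    ring
  exact le_antisymm (inner_le_of_forall_le h t _ fun s hs _ => (key s hs).le)
    (le_inner_of_forall_le h t _ fun s hs _ => (key s hs).ge)

/-- The tangent functional at `t` dominates a concave, degree-one homogeneous function. -/
lemma le_inner_gradient {K : Set E} {F : E → ℝ} {g t x : E} (hconc : ConcaveOn ℝ K F)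
    (h : HasGradientAt F g t) (hhom : ∀ c : ℝ, 0 ≤ c → F (c • t) = c * F t)
    (ht : t ∈ K) (hx : x ∈ K) : F x ≤ ⟪g, x⟫_ℝ := by
  have h1 : F x - F t ≤ ⟪g, x - t⟫_ℝ := by
    refine le_inner_of_forall_le h _ _ fun s hs hs1 => ?_
    have := hconc.2 ht hx (sub_nonneg.2 hs1.le) hs.le (by ring)
    rw [show t + s • (x - t) = (1 - s) • t + s • x by module]
    simp only [smul_eq_mul] at this
    linarith
  rw [inner_sub_right, inner_gradient_self h hhom] at h1
  linarith

end Gradient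

/-- All-in adoption threshold.  For an output function `F` that is
concave and homogeneous of degree one on the nonnegative orthant, differentiable
at the technology direction `t` with `F t > 0`, and a convex compact autarky set
`X_A` in the orthant, the technology point `y = B·χ·t` maximizes `F` over
`conv(X_A ∪ {y})` iff `B·χ·F(t) ≥ max {⟪∇F(t), x⟫ : x ∈ X_A}`; consequently the
worker goes all in exactly when `χ ≥ χ₁₀₀ = max {⟪∇F(t), x⟫ : x ∈ X_A}/(B·F t)`. -/
theorem stmt_8 (N : ℕ) (hN : 1 ≤ N) (B χ : ℝ) (hB : 0 < B) (hχ : 0 < χ)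
    (t : EuclideanSpace ℝ (Fin N)) (ht : ∀ i, 0 ≤ t i)
    (F : EuclideanSpace ℝ (Fin N) → ℝ)
    (hconc : ConcaveOn ℝ {x : EuclideanSpace ℝ (Fin N) | ∀ i, 0 ≤ x i} F)
    (hhom : ∀ c : ℝ, 0 ≤ c → ∀ x : EuclideanSpace ℝ (Fin N), (∀ i, 0 ≤ x i) →
      F (c • x) = c * F x)
    (gFt : EuclideanSpace ℝ (Fin N)) (hgFt : HasGradientAt F gFt t)
    (hFt : 0 < F t)
    (X_A : Set (EuclideanSpace ℝ (Fin N))) (hXc : Convex ℝ X_A) (hXk : IsCompact X_A)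
    (hXpos : ∀ x ∈ X_A, ∀ i, 0 ≤ x i) :
    ((∀ z ∈ convexHull ℝ (X_A ∪ {(B * χ) • t}), F z ≤ F ((B * χ) • t)) ↔
      sSup ((fun x => ⟪gFt, x⟫_ℝ) '' X_A) ≤ B * χ * F t) ∧
    ((∀ z ∈ convexHull ℝ (X_A ∪ {(B * χ) • t}), F z ≤ F ((B * χ) • t)) ↔
      sSup ((fun x => ⟪gFt, x⟫_ℝ) '' X_A) / (B * F t) ≤ χ) := by
  set k := B * χ with hk
  have hk0 : 0 < k := mul_pos hB hχ
  have hFy : F (k • t) = k * F t := hhom k hk0.le t ht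
  have hray : ∀ c : ℝ, 0 ≤ c → F (c • t) = c * F t := fun c hc => hhom c hc t ht
  have hcont : Continuous fun x => ⟪gFt, x⟫_ℝ := by fun_prop
  have hbdd : BddAbove ((fun x => ⟪gFt, x⟫_ℝ) '' X_A) := (hXk.image hcont).bddAbove
  have main : (∀ z ∈ convexHull ℝ (X_A ∪ {k • t}), F z ≤ F (k • t)) ↔
      sSup ((fun x => ⟪gFt, x⟫_ℝ) '' X_A) ≤ k * F t := by
    constructor
    · intro H
      -- For empty `X_A` the supremum is `0` by convention, still at most `k * F t`.
      refine Real.sSup_le ?_ (mul_pos hk0 hFt).le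
      rintro _ ⟨x, hx, rfl⟩
      -- The segment from `y = k • t` to `x` is `k` times the one from `t` to `k⁻¹ • x`.
      have h1 : ⟪gFt, k⁻¹ • x - t⟫_ℝ ≤ 0 := by
        refine inner_le_of_forall_le hgFt _ _ fun s hs hs1 => ?_
        have hz : k • (t + s • (k⁻¹ • x - t)) = (1 - s) • (k • t) + s • x := by
          match_scalars <;> field_simp <;> ring
        have hpos : ∀ i, 0 ≤ (t + s • (k⁻¹ • x - t)) i := fun i => by
          rw [show t + s • (k⁻¹ • x - t) = (1 - s) • t + (s * k⁻¹) • x by module]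
          have := mul_nonneg (sub_nonneg.2 hs1.le) (ht i)
          have := mul_nonneg (mul_nonneg hs.le (inv_nonneg.2 hk0.le)) (hXpos x hx i)
          simp only [PiLp.add_apply, PiLp.smul_apply, smul_eq_mul]
          linarith
        have hmem : (1 - s) • (k • t) + s • x ∈ convexHull ℝ (X_A ∪ {k • t}) :=
          convex_convexHull ℝ _ (subset_convexHull ℝ _ (Set.mem_union_right _ (Set.mem_singleton _)))
            (subset_convexHull ℝ _ (Set.mem_union_left _ hx)) (sub_nonneg.2 hs1.le) hs.le (by ring)
        have h2 := H _ hmem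
        rw [← hz, hhom k hk0.le _ hpos, hFy] at h2
        linarith [le_of_mul_le_mul_left h2 hk0]
      rw [inner_sub_right, inner_gradient_self hgFt hray, inner_smul_right, sub_nonpos,
        inv_mul_le_iff₀ hk0] at h1
      exact h1
    · intro H z hz
      -- The orthant and the half-space `⟪gFt, ·⟫ ≤ k * F t` are convex and contain `X_A` and `y`.
      have hsub : convexHull ℝ (X_A ∪ {k • t}) ⊆
          {x | ∀ i, 0 ≤ x i} ∩ {x | ⟪gFt, x⟫_ℝ ≤ k * F t} := by
        refine convexHull_min ?_
          (hconc.1.inter (convex_halfSpace_le (innerₗ _ gFt).isLinear _))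
        rintro x (hx | hx)
        · exact ⟨hXpos x hx, (le_csSup hbdd ⟨x, hx, rfl⟩).trans H⟩
        · obtain rfl := Set.mem_singleton_iff.1 hx
          refine ⟨fun i => mul_nonneg hk0.le (ht i), ?_⟩
          simp only [Set.mem_ofPred_eq]
          rw [inner_smul_right, inner_gradient_self hgFt hray]
      obtain ⟨hzpos, hzle⟩ := hsub hz
      rw [hFy]
      exact (le_inner_gradient hconc hgFt hray ht hzpos).trans hzle
  refine ⟨main, main.trans ?_⟩
  rw [div_le_iff₀ (mul_pos hB hFt), show k * F t = χ * (B * F t) by rw [hk]; ring]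
end

section
/- Let N ≥ 1, B > 0, χ ≥ 0, and let t ∈ ℝ^N with t ≥ 0. Let F be concave on ℝ^N, positively homogeneous of degree one (F(c·x) = c·F(x) for all c ≥ 0), and differentiable at x_A, where x_A maximizes F over a convex set X_A ⊆ ℝ^N contained in the nonnegative orthant, with F(x_A) ≥ 0. If ⟨∇F(x_A), t⟩ = 0, then F(z) ≤ F(x_A) for every z ∈ conv(X_A ∪ {B·χ·t}) and every χ ≥ 0: a worker whose autarky shadow prices are orthogonal to the technology direction never gains from adopting the technology, regardless of its capability. -/
/-!
Write `g = ∇F(x_A)`. The gradient of a concave function is a supergradient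
(`inner_gradient_ge`), so `F z ≤ F x_A + ⟪g, z - x_A⟫`. Homogeneity, via this inequality at
`z = 0` and `z = 2 x_A`, gives Euler's identity `⟪g, x_A⟫ = F x_A`, hence `F z ≤ ⟪g, z⟫` for
every `z`. It remains to see that the half-space `{z | ⟪g, z⟫ ≤ F x_A}` contains the convex hull:
it contains `X_A` by the first-order optimality condition (`inner_gradient_le`), and the
technology point because `⟪g, t⟫ = 0 ≤ F x_A`.
-/

open scoped InnerProductSpace

open Filter Topology in
/-- Difference quotients of `F` along the segment from `x` to `y` converge, from the right, to the
directional derivative given by the gradient. -/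
lemma tendsto_quotient {E : Type*} [NormedAddCommGroup E] [InnerProductSpace ℝ E]
    [CompleteSpace E] {F : E → ℝ} {x g : E} (hg : HasGradientAt F g x) (y : E) :
    Tendsto (fun s : ℝ => s⁻¹ * (F (x + s • (y - x)) - F x)) (𝓝[>] 0) (𝓝 ⟪g, y - x⟫_ℝ) := by
  have h1 : HasLineDerivAt ℝ F ⟪g, y - x⟫_ℝ x (y - x) := by
    simpa using hg.hasFDerivAt.hasLineDerivAt (y - x)
  simpa [smul_eq_mul] using h1.tendsto_slope_zero_right

open Filter Topology in
lemma inner_gradient_ge {E : Type*} [NormedAddCommGroup E] [InnerProductSpace ℝ E]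
    [CompleteSpace E] {F : E → ℝ} {x g : E} (hg : HasGradientAt F g x)
    (hF : ConcaveOn ℝ Set.univ F) (y : E) : F y - F x ≤ ⟪g, y - x⟫_ℝ := by
  refine ge_of_tendsto (tendsto_quotient hg y) ?_
  filter_upwards [Ioo_mem_nhdsGT (zero_lt_one (α := ℝ))] with s hs
  have h := hF.2 (Set.mem_univ x) (Set.mem_univ y) (sub_nonneg.2 hs.2.le) hs.1.le (by ring)
  have e : (1 - s) • x + s • y = x + s • (y - x) := by module
  rw [e, smul_eq_mul, smul_eq_mul] at h
  rw [le_inv_mul_iff₀ hs.1]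
  linarith

open Filter Topology in
/-- First-order necessary condition for a maximum over a convex set. -/
lemma inner_gradient_le {E : Type*} [NormedAddCommGroup E] [InnerProductSpace ℝ E]
    [CompleteSpace E] {F : E → ℝ} {x g : E} (hg : HasGradientAt F g x) {X : Set E}
    (hX : Convex ℝ X) (hx : x ∈ X) (hmax : ∀ y ∈ X, F y ≤ F x) {y : E} (hy : y ∈ X) :
    ⟪g, y - x⟫_ℝ ≤ 0 := by
  refine le_of_tendsto (tendsto_quotient hg y) ?_
  filter_upwards [Ioo_mem_nhdsGT (zero_lt_one (α := ℝ))] with s hs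
  have h := hmax _ (hX.add_smul_sub_mem hx hy ⟨hs.1.le, hs.2.le⟩)
  exact mul_nonpos_of_nonneg_of_nonpos (inv_nonneg.2 hs.1.le) (sub_nonpos.2 h)

/-- No adoption under orthogonality.  If the autarky shadow price
`∇F(x_A)` is orthogonal to the technology direction `t`, the worker never gains
from the technology, regardless of its capability `χ ≥ 0`. -/
theorem stmt_9 (N : ℕ) (hN : 1 ≤ N) (B : ℝ) (hB : 0 < B)
    (t : EuclideanSpace ℝ (Fin N)) (ht : ∀ i, 0 ≤ t i)
    (F : EuclideanSpace ℝ (Fin N) → ℝ)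
    (hconc : ConcaveOn ℝ Set.univ F)
    (hhom : ∀ c : ℝ, 0 ≤ c → ∀ x : EuclideanSpace ℝ (Fin N), F (c • x) = c * F x)
    (X_A : Set (EuclideanSpace ℝ (Fin N))) (hXc : Convex ℝ X_A)
    (hXpos : ∀ x ∈ X_A, ∀ i, 0 ≤ x i)
    (xA : EuclideanSpace ℝ (Fin N)) (hxA : xA ∈ X_A)
    (hmax : ∀ x ∈ X_A, F x ≤ F xA)
    (gF : EuclideanSpace ℝ (Fin N)) (hgF : HasGradientAt F gF xA)
    (hFA : 0 ≤ F xA) (horth : ⟪gF, t⟫_ℝ = 0) :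
    ∀ χ : ℝ, 0 ≤ χ → ∀ z ∈ convexHull ℝ (X_A ∪ {(B * χ) • t}), F z ≤ F xA := by
  intro χ _ z hz
  have h0 := inner_gradient_ge hgF hconc ((0 : ℝ) • xA)
  have h2 := inner_gradient_ge hgF hconc ((2 : ℝ) • xA)
  have hzF := inner_gradient_ge hgF hconc z
  rw [hhom 0 le_rfl, inner_sub_right, inner_smul_right] at h0
  rw [hhom 2 zero_le_two, inner_sub_right, inner_smul_right] at h2
  rw [inner_sub_right] at hzF
  have hsub : convexHull ℝ (X_A ∪ {(B * χ) • t}) ⊆ {w | ⟪gF, w⟫_ℝ ≤ F xA} := by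
    refine convexHull_min ?_ (convex_halfSpace_le (innerₛₗ ℝ gF).isLinear (F xA))
    rintro w (hw | rfl)
    · have h := inner_gradient_le hgF hXc hxA hmax hw
      rw [inner_sub_right] at h
      simp only [Set.mem_ofPred_eq]
      linarith
    · simpa [inner_smul_right, horth] using hFA
  have hz' : ⟪gF, z⟫_ℝ ≤ F xA := hsub hz
  linarith
end

section
/- Let N ≥ 1, K ≥ 1, B > 0, let y₁, …, y_K ∈ ℝ^N with y_k ≥ 0 for each k, and let g : ℝ^N → ℝ be convex, positively homogeneous of degree one (g(c·x) = c·g(x) for all c ≥ 0 and all x), with g(x) > 0 for every x ≥ 0 with x ≠ 0. Set X_A = {x ∈ ℝ^N : x ≥ 0 and g(x) ≤ B}, and define the K-technology production possibility set X_{T,K} = {z ∈ ℝ^N : z ≥ 0 and there exist x_H ≥ 0 and λ₁, …, λ_K ≥ 0 with λ₁ + ⋯ + λ_K ≤ 1, z ≤ x_H + λ₁·y₁ + ⋯ + λ_K·y_K, and g(x_H) ≤ (1 − λ₁ − ⋯ − λ_K)·B}. Then X_{T,K} equals the free-disposal closure of the convex hull of X_A ∪ {y₁, …, y_K}. -/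
/-!
Put `s = ∑ k, lam k`. A feasible plan `(xH, lam)` is a convex combination in disguise: since `g` is
homogeneous and positive away from `0`, `g xH ≤ (1 - s) * B` says exactly that `xH = (1 - s) • a` for
some `a` with `g a ≤ B` (`exists_scaled_autarky`; when `s = 1` this forces `xH = 0`). Hence
`xH + ∑ k, lam k • y k` lies in the convex hull. Conversely, the exact outputs of feasible plans form
a convex set, because `g` is convex and the constraints are otherwise linear (`convex_planOutputs`),
and this set contains every generator of the hull.
-/

/-- The outputs `xH + ∑ k, lam k • y k` of feasible plans, before any disposal. -/
def planOutputs {N K : ℕ} (B : ℝ) (y : Fin K → Fin N → ℝ) (g : (Fin N → ℝ) → ℝ) :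
    Set (Fin N → ℝ) :=
  {w | ∃ (xH : Fin N → ℝ) (lam : Fin K → ℝ),
    (∀ i, 0 ≤ xH i) ∧ (∀ k, 0 ≤ lam k) ∧ (∑ k, lam k) ≤ 1 ∧
    w = xH + ∑ k, lam k • y k ∧ g xH ≤ (1 - ∑ k, lam k) * B}

theorem convex_planOutputs {N K : ℕ} (B : ℝ) (y : Fin K → Fin N → ℝ) (g : (Fin N → ℝ) → ℝ)
    (hg_conv : ConvexOn ℝ Set.univ g) : Convex ℝ (planOutputs B y g) := by
  rintro _ ⟨x, l, hx, hl, hls, rfl, hg⟩ _ ⟨x', l', hx', hl', hls', rfl, hg'⟩ a b ha hb hab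
  have hsum : ∑ k, (a • l + b • l') k = a * ∑ k, l k + b * ∑ k, l' k := by
    simp [Finset.sum_add_distrib, Finset.mul_sum]
  refine ⟨a • x + b • x', a • l + b • l', fun i => ?_, fun k => ?_, ?_, ?_, ?_⟩
  · exact add_nonneg (mul_nonneg ha (hx i)) (mul_nonneg hb (hx' i))
  · exact add_nonneg (mul_nonneg ha (hl k)) (mul_nonneg hb (hl' k))
  · rw [hsum]
    nlinarith
  · simp only [Pi.add_apply, Pi.smul_apply, smul_eq_mul, add_smul, mul_smul,
      Finset.sum_add_distrib, smul_add, Finset.smul_sum]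
    abel
  · have h := hg_conv.2 (Set.mem_univ x) (Set.mem_univ x') ha hb hab
    rw [hsum]
    simp only [smul_eq_mul] at h
    have h1 := mul_le_mul_of_nonneg_left hg ha
    have h2 := mul_le_mul_of_nonneg_left hg' hb
    have hb' : b = 1 - a := by linarith
    subst hb'
    linarith

/-- A bundle producible within the budget share `m * B` is `m` times a bundle of the autarky set,
including the degenerate share `m = 0`, where positivity of `g` leaves only the zero bundle. -/
theorem exists_scaled_autarky {N : ℕ} {B : ℝ} (hB : 0 < B) (g : (Fin N → ℝ) → ℝ)
    (hg_hom : ∀ c : ℝ, 0 ≤ c → ∀ x : Fin N → ℝ, g (c • x) = c * g x)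
    (hg_pos : ∀ x : Fin N → ℝ, (∀ i, 0 ≤ x i) → x ≠ 0 → 0 < g x)
    {m : ℝ} (hm : 0 ≤ m) {x : Fin N → ℝ} (hx : ∀ i, 0 ≤ x i) (hgx : g x ≤ m * B) :
    ∃ a : Fin N → ℝ, (∀ i, 0 ≤ a i) ∧ g a ≤ B ∧ x = m • a := by
  rcases hm.eq_or_lt with rfl | hm
  · have h0 : g 0 = 0 := by simpa using hg_hom 0 le_rfl 0
    refine ⟨0, fun i => le_rfl, h0.trans_le hB.le, ?_⟩
    by_contra hne
    have := hg_pos x hx (by simpa using hne)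
    linarith
  · refine ⟨m⁻¹ • x, fun i => mul_nonneg (inv_nonneg.2 hm.le) (hx i), ?_, ?_⟩
    · rw [hg_hom _ (inv_nonneg.2 hm.le), inv_mul_le_iff₀ hm]
      exact hgx
    · rw [smul_inv_smul₀ hm.ne']


/-- The multi-technology production possibility set equals the
free-disposal closure of the convex hull of the autarky PPS `X_A` and the
technology points `y₁, …, y_K`. -/
theorem stmt_12 (N K : ℕ) (hN : 1 ≤ N) (hK : 1 ≤ K) (B : ℝ) (hB : 0 < B)
    (y : Fin K → Fin N → ℝ) (hy : ∀ k i, 0 ≤ y k i)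
    (g : (Fin N → ℝ) → ℝ)
    (hg_conv : ConvexOn ℝ Set.univ g)
    (hg_hom : ∀ c : ℝ, 0 ≤ c → ∀ x : Fin N → ℝ, g (c • x) = c * g x)
    (hg_pos : ∀ x : Fin N → ℝ, (∀ i, 0 ≤ x i) → x ≠ 0 → 0 < g x) :
    {z : Fin N → ℝ | (∀ i, 0 ≤ z i) ∧ ∃ (xH : Fin N → ℝ) (lam : Fin K → ℝ),
        (∀ i, 0 ≤ xH i) ∧ (∀ k, 0 ≤ lam k) ∧ (∑ k, lam k) ≤ 1 ∧
        (∀ i, z i ≤ xH i + ∑ k, lam k * y k i) ∧ g xH ≤ (1 - ∑ k, lam k) * B}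
    = {z : Fin N → ℝ | (∀ i, 0 ≤ z i) ∧ ∃ w ∈ convexHull ℝ
        ({x : Fin N → ℝ | (∀ i, 0 ≤ x i) ∧ g x ≤ B} ∪ Set.range y),
        ∀ i, z i ≤ w i} := by
  ext z
  constructor
  · rintro ⟨hz, xH, lam, hx, hl, hls, hzle, hg⟩
    obtain ⟨a, ha, hga, rfl⟩ :=
      exists_scaled_autarky hB g hg_hom hg_pos (sub_nonneg.2 hls) hx hg
    refine ⟨hz, (1 - ∑ k, lam k) • a + ∑ k, lam k • y k, ?_, fun i => ?_⟩
    · -- A convex combination indexed by `Option (Fin K)`: `none` carries the autarky bundle.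
      have h := (convex_convexHull ℝ
        ({x : Fin N → ℝ | (∀ i, 0 ≤ x i) ∧ g x ≤ B} ∪ Set.range y)).sum_mem
        (t := Finset.univ) (w := fun o : Option (Fin K) => o.elim (1 - ∑ k, lam k) lam)
        (z := fun o => o.elim a y) ?_ ?_ ?_
      · simpa [Fintype.sum_option] using h
      · rintro (_ | k) -
        · exact sub_nonneg.2 hls
        · exact hl k
      · simp [Fintype.sum_option]
      · rintro (_ | k) -
        · exact subset_convexHull ℝ _ (Or.inl ⟨ha, hga⟩)
        · exact subset_convexHull ℝ _ (Or.inr ⟨k, rfl⟩)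
    · simpa [Finset.sum_apply] using hzle i
  · rintro ⟨hz, w, hw, hzw⟩
    have hsub : {x : Fin N → ℝ | (∀ i, 0 ≤ x i) ∧ g x ≤ B} ∪ Set.range y ⊆
        planOutputs B y g := by
      rintro x (⟨hx, hgx⟩ | ⟨k, rfl⟩)
      · exact ⟨x, 0, hx, fun _ => le_rfl, by simp, by simp, by simpa using hgx⟩
      · have h0 : g 0 = 0 := by simpa using hg_hom 0 le_rfl 0
        refine ⟨0, Pi.single k 1, fun _ => le_rfl, fun j => ?_, by simp, ?_, by simp [h0]⟩
        · exact (Pi.single_nonneg.2 zero_le_one : (0 : Fin K → ℝ) ≤ Pi.single k 1) j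
        · simp [Pi.single_apply, ite_smul]
    obtain ⟨xH, lam, hx, hl, hls, rfl, hg⟩ :=
      convexHull_min hsub (convex_planOutputs B y g hg_conv) hw
    exact ⟨hz, xH, lam, hx, hl, hls, fun i => by simpa [Finset.sum_apply] using hzw i, hg⟩
end

section
/- Fix N ≥ 1, real parameters σ > 0 with σ ≠ 1 and γ > 0, vectors θ, s ∈ ℝ^N with θ_i > 0 and s_i > 0 for all i, and a budget B > 0. Let F(x) = (Σ_{i=1}^N θ_i^{1/σ} x_i^{(σ−1)/σ})^{σ/(σ−1)}, g(x) = (Σ_{i=1}^N s_i^{−1/γ} x_i^{(γ+1)/γ})^{γ/(γ+1)}, Φ = Σ_{j=1}^N s_j^{(σ−1)/(γ+σ)} θ_j^{(γ+1)/(γ+σ)}, and let x^A ∈ ℝ^N have coordinates x_i^A = B · s_i^{σ/(γ+σ)} θ_i^{γ/(γ+σ)} · Φ^{−γ/(γ+1)}. Then: (a) g(x^A) = B; (b) x^A maximizes F over the set {x ∈ ℝ^N : x_i > 0 for all i and g(x) ≤ B}; and (c) F(x^A) = B · Φ^{(γ+σ)/((γ+1)(σ−1))}. -/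
/-!
Write `aᵢ = sᵢ^((σ-1)/(γ+σ)) θᵢ^((γ+1)/(γ+σ))`, so that `Φ = ∑ aᵢ`, and measure a bundle relative to the
candidate, `xᵢ = xᵢᴬ yᵢ`. With `p = (γ+1)/γ > 1` and `r = (σ-1)/σ < 1`, the exponents are such that
both aggregates become power sums of `y` with the same weights `aᵢ`:
`∑ sᵢ^(-1/γ) xᵢ^p = (B^p / Φ) ∑ aᵢ yᵢ^p` and `∑ θᵢ^(1/σ) xᵢ^r = K ∑ aᵢ yᵢ^r` with
`K = B^r Φ^(-γ r/(γ+1))`. Taking `y = 1` gives the closed forms for `g(x^A)` and `F(x^A)`.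
Optimality is then the inequality between power means of orders `r` and `p`, which follows by
comparing both with the arithmetic mean through Bernoulli's inequality.
-/

/-- Convexity of `y ↦ y ^ r` for negative exponents, as a tangent-line bound at `1`. -/
lemma tangent_le_rpow_of_neg {y r : ℝ} (hy : 0 < y) (hr : r < 0) :
    1 + r * (y - 1) ≤ y ^ r := by
  have h1 : y ^ r = Real.exp (r * Real.log y) := by
    rw [Real.rpow_def_of_pos hy, mul_comm]
  have h2 := Real.add_one_le_exp (r * Real.log y)
  have h3 := mul_le_mul_of_nonpos_left (Real.log_le_sub_one_of_pos hy) hr.le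
  rw [h1]
  linarith

/-- Linearizing `y ^ r` at `1` inside a weighted sum. -/
lemma sum_mul_tangent {ι : Type*} [Fintype ι] (a y : ι → ℝ) (r : ℝ) :
    ∑ i, a i * (1 + r * (y i - 1)) = (∑ i, a i) + r * (∑ i, a i * y i - ∑ i, a i) := by
  rw [← Finset.sum_sub_distrib, Finset.mul_sum, ← Finset.sum_add_distrib]
  exact Finset.sum_congr rfl fun i _ => by ring

/-- If the `a`-weighted mean of order `p ≥ 1` of `y` is at most `1`, so is the arithmetic mean. -/
lemma sum_mul_le_of_sum_mul_rpow_le {ι : Type*} [Fintype ι] {a y : ι → ℝ} {p : ℝ}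
    (ha : ∀ i, 0 < a i) (hy : ∀ i, 0 < y i) (hp : 1 ≤ p)
    (h : ∑ i, a i * y i ^ p ≤ ∑ i, a i) : ∑ i, a i * y i ≤ ∑ i, a i := by
  have h1 : ∑ i, a i * (1 + p * (y i - 1)) ≤ ∑ i, a i * y i ^ p := by
    refine Finset.sum_le_sum fun i _ => mul_le_mul_of_nonneg_left ?_ (ha i).le
    simpa using one_add_mul_self_le_rpow_one_add (s := y i - 1) (by linarith [hy i]) hp
  rw [sum_mul_tangent] at h1
  nlinarith

lemma sum_mul_rpow_le_of_pos {ι : Type*} [Fintype ι] {a y : ι → ℝ} {r : ℝ}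
    (ha : ∀ i, 0 < a i) (hy : ∀ i, 0 < y i) (hr0 : 0 < r) (hr1 : r ≤ 1)
    (h : ∑ i, a i * y i ≤ ∑ i, a i) : ∑ i, a i * y i ^ r ≤ ∑ i, a i := by
  have h1 : ∑ i, a i * y i ^ r ≤ ∑ i, a i * (1 + r * (y i - 1)) := by
    refine Finset.sum_le_sum fun i _ => mul_le_mul_of_nonneg_left ?_ (ha i).le
    simpa using rpow_one_add_le_one_add_mul_self (s := y i - 1) (by linarith [hy i]) hr0.le hr1
  rw [sum_mul_tangent] at h1
  nlinarith

lemma le_sum_mul_rpow_of_neg {ι : Type*} [Fintype ι] {a y : ι → ℝ} {r : ℝ}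
    (ha : ∀ i, 0 < a i) (hy : ∀ i, 0 < y i) (hr : r < 0)
    (h : ∑ i, a i * y i ≤ ∑ i, a i) : ∑ i, a i ≤ ∑ i, a i * y i ^ r := by
  have h1 : ∑ i, a i * (1 + r * (y i - 1)) ≤ ∑ i, a i * y i ^ r :=
    Finset.sum_le_sum fun i _ =>
      mul_le_mul_of_nonneg_left (tangent_le_rpow_of_neg (hy i) hr) (ha i).le
  rw [sum_mul_tangent] at h1
  nlinarith

/-- The resource-use summand at `x = x^A y`. -/
lemma resource_term {σ γ B θ s Φ y : ℝ} (hσ : 0 < σ) (hγ : 0 < γ) (hB : 0 < B)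
    (hθ : 0 < θ) (hs : 0 < s) (hΦ : 0 < Φ) (hy : 0 < y) :
    s ^ (-1 / γ) * (B * s ^ (σ / (γ + σ)) * θ ^ (γ / (γ + σ)) * Φ ^ (-γ / (γ + 1)) * y)
        ^ ((γ + 1) / γ)
      = B ^ ((γ + 1) / γ) / Φ *
        (s ^ ((σ - 1) / (γ + σ)) * θ ^ ((γ + 1) / (γ + σ)) * y ^ ((γ + 1) / γ)) := by
  have hγσ : γ + σ ≠ 0 := by positivity
  have hγ1 : γ + 1 ≠ 0 := by positivity
  refine Real.log_injOn_pos (Set.mem_Ioi.2 (by positivity)) (Set.mem_Ioi.2 (by positivity)) ?_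
  simp (disch := positivity) only [Real.log_mul, Real.log_rpow, Real.log_div]
  field_simp
  ring

/-- The output summand at `x = x^A y`. -/
lemma output_term {σ γ B θ s Φ y : ℝ} (hσ : 0 < σ) (hγ : 0 < γ) (hB : 0 < B)
    (hθ : 0 < θ) (hs : 0 < s) (hΦ : 0 < Φ) (hy : 0 < y) :
    θ ^ (1 / σ) * (B * s ^ (σ / (γ + σ)) * θ ^ (γ / (γ + σ)) * Φ ^ (-γ / (γ + 1)) * y)
        ^ ((σ - 1) / σ)
      = B ^ ((σ - 1) / σ) * Φ ^ (-γ / (γ + 1) * ((σ - 1) / σ)) *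
        (s ^ ((σ - 1) / (γ + σ)) * θ ^ ((γ + 1) / (γ + σ)) * y ^ ((σ - 1) / σ)) := by
  have hγσ : γ + σ ≠ 0 := by positivity
  have hγ1 : γ + 1 ≠ 0 := by positivity
  refine Real.log_injOn_pos (Set.mem_Ioi.2 (by positivity)) (Set.mem_Ioi.2 (by positivity)) ?_
  simp (disch := positivity) only [Real.log_mul, Real.log_rpow]
  field_simp
  ring

/-- CES–CET autarky allocation in closed form.  With CES
production `F`, CET resource use `g`, productivity index `Φ`, and the candidate
allocation `x^A`: (a) `g(x^A) = B`; (b) `x^A` maximizes `F` over strictly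
positive bundles with `g(x) ≤ B`; (c) `F(x^A) = B·Φ^((γ+σ)/((γ+1)(σ−1)))`. -/
theorem stmt_16 (N : ℕ) (hN : 1 ≤ N) (σ γ B : ℝ)
    (hσ : 0 < σ) (hσ1 : σ ≠ 1) (hγ : 0 < γ) (hB : 0 < B)
    (θ s : Fin N → ℝ) (hθ : ∀ i, 0 < θ i) (hs : ∀ i, 0 < s i)
    (F g : (Fin N → ℝ) → ℝ)
    (hF : ∀ x : Fin N → ℝ,
      F x = (∑ i, θ i ^ (1 / σ) * x i ^ ((σ - 1) / σ)) ^ (σ / (σ - 1)))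
    (hg : ∀ x : Fin N → ℝ,
      g x = (∑ i, s i ^ (-1 / γ) * x i ^ ((γ + 1) / γ)) ^ (γ / (γ + 1)))
    (Φ : ℝ) (hΦ : Φ = ∑ j, s j ^ ((σ - 1) / (γ + σ)) * θ j ^ ((γ + 1) / (γ + σ)))
    (xA : Fin N → ℝ)
    (hxA : ∀ i, xA i = B * s i ^ (σ / (γ + σ)) * θ i ^ (γ / (γ + σ)) * Φ ^ (-γ / (γ + 1))) :
    g xA = B ∧
    (∀ x : Fin N → ℝ, (∀ i, 0 < x i) → g x ≤ B → F x ≤ F xA) ∧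
    F xA = B * Φ ^ ((γ + σ) / ((γ + 1) * (σ - 1))) := by
  have : Nonempty (Fin N) := ⟨⟨0, hN⟩⟩
  have hγσ : γ + σ ≠ 0 := by positivity
  have hγ1 : γ + 1 ≠ 0 := by positivity
  have hσ1' : σ - 1 ≠ 0 := sub_ne_zero.2 hσ1
  set a : Fin N → ℝ := fun j => s j ^ ((σ - 1) / (γ + σ)) * θ j ^ ((γ + 1) / (γ + σ)) with ha_def
  have ha : ∀ i, 0 < a i := fun i =>
    mul_pos (Real.rpow_pos_of_pos (hs i) _) (Real.rpow_pos_of_pos (hθ i) _)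
  have hΦ' : Φ = ∑ i, a i := hΦ
  have hΦ0 : 0 < Φ := hΦ' ▸ Finset.sum_pos (fun i _ => ha i) Finset.univ_nonempty
  have hxA0 : ∀ i, 0 < xA i := fun i => by
    have := hs i
    have := hθ i
    rw [hxA]
    positivity
  set p := (γ + 1) / γ with hp
  set r := (σ - 1) / σ with hr
  have hp1 : 1 ≤ p := by rw [hp, le_div_iff₀ hγ]; linarith
  have hp0 : 0 < p := by linarith
  have hpinv : γ / (γ + 1) = p⁻¹ := by rw [hp, inv_div]
  have hrinv : σ / (σ - 1) = r⁻¹ := by rw [hr, inv_div]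
  set K := B ^ r * Φ ^ (-γ / (γ + 1) * r) with hK
  have hK0 : 0 < K := by positivity
  have hgy : ∀ y : Fin N → ℝ, (∀ i, 0 < y i) →
      g (fun i => xA i * y i) = (B ^ p / Φ * ∑ i, a i * y i ^ p) ^ p⁻¹ := fun y hy => by
    rw [hg, hpinv, Finset.mul_sum]
    congr 1
    refine Finset.sum_congr rfl fun i _ => ?_
    rw [hxA]
    exact resource_term hσ hγ hB (hθ i) (hs i) hΦ0 (hy i)
  have hFy : ∀ y : Fin N → ℝ, (∀ i, 0 < y i) →
      F (fun i => xA i * y i) = (K * ∑ i, a i * y i ^ r) ^ r⁻¹ := fun y hy => by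
    rw [hF, hrinv, Finset.mul_sum]
    congr 1
    refine Finset.sum_congr rfl fun i _ => ?_
    rw [hxA]
    exact output_term hσ hγ hB (hθ i) (hs i) hΦ0 (hy i)
  have hgA : g xA = B := by
    have h := hgy (fun _ => 1) (fun _ => one_pos)
    simp only [mul_one, Real.one_rpow] at h
    rw [← hΦ', div_mul_cancel₀ _ hΦ0.ne', Real.rpow_rpow_inv hB.le hp0.ne'] at h
    exact h
  have hFA : F xA = (K * Φ) ^ r⁻¹ := by
    have h := hFy (fun _ => 1) (fun _ => one_pos)
    simp only [mul_one, Real.one_rpow] at h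
    rw [← hΦ'] at h
    exact h
  refine ⟨hgA, fun x hx hgx => ?_, ?_⟩
  · obtain ⟨y, hy, rfl⟩ : ∃ y : Fin N → ℝ, (∀ i, 0 < y i) ∧ x = fun i => xA i * y i :=
      ⟨fun i => x i / xA i, fun i => div_pos (hx i) (hxA0 i),
        funext fun i => (mul_div_cancel₀ (x i) (hxA0 i).ne').symm⟩
    have hS0 : ∀ q : ℝ, 0 < ∑ i, a i * y i ^ q := fun q =>
      Finset.sum_pos (fun i _ => mul_pos (ha i) (Real.rpow_pos_of_pos (hy i) _))
        Finset.univ_nonempty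
    have hSp0 := hS0 p
    have hSp : ∑ i, a i * y i ^ p ≤ ∑ i, a i := by
      rw [hgy y hy, Real.rpow_inv_le_iff_of_pos (by positivity) hB.le hp0, div_mul_eq_mul_div,
        div_le_iff₀ hΦ0, hΦ'] at hgx
      exact le_of_mul_le_mul_left hgx (by positivity)
    have hS1 := sum_mul_le_of_sum_mul_rpow_le ha hy hp1 hSp
    rw [hFy y hy, hFA, hΦ']
    rcases lt_or_gt_of_ne hσ1 with h | h
    · have hr0 : r < 0 := div_neg_of_neg_of_pos (by linarith) hσ
      -- For `σ < 1` the inequality between the sums and the outer exponent both reverse.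
      exact Real.rpow_le_rpow_of_nonpos (mul_pos hK0 (hΦ' ▸ hΦ0))
        (mul_le_mul_of_nonneg_left (le_sum_mul_rpow_of_neg ha hy hr0 hS1) hK0.le)
        (inv_nonpos.2 hr0.le)
    · have hr0 : 0 < r := div_pos (by linarith) hσ
      have hr1 : r ≤ 1 := by rw [hr, div_le_iff₀ hσ]; linarith
      exact Real.rpow_le_rpow (mul_pos hK0 (hS0 r)).le
        (mul_le_mul_of_nonneg_left (sum_mul_rpow_le_of_pos ha hy hr0 hr1 hS1) hK0.le)
        (inv_nonneg.2 hr0.le)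
  · rw [hFA, hK, hr]
    refine Real.log_injOn_pos (Set.mem_Ioi.2 (by positivity)) (Set.mem_Ioi.2 (by positivity)) ?_
    simp (disch := positivity) only [Real.log_mul, Real.log_rpow]
    field_simp
    ring
end

section
/- Fix N ≥ 1, real parameters σ > 0 with σ ≠ 1 and γ > 0, vectors θ, s ∈ ℝ^N with θ_i > 0 and s_i > 0 for all i, and a budget B > 0. Let F(x) = (Σ_{i=1}^N θ_i^{1/σ} x_i^{(σ−1)/σ})^{σ/(σ−1)}, g(x) = (Σ_{i=1}^N s_i^{−1/γ} x_i^{(γ+1)/γ})^{γ/(γ+1)}, Φ = Σ_{j=1}^N s_j^{(σ−1)/(γ+σ)} θ_j^{(γ+1)/(γ+σ)}, and let x^A have coordinates x_i^A = B · s_i^{σ/(γ+σ)} θ_i^{γ/(γ+σ)} · Φ^{−γ/(γ+1)}. Then the gradient of g at x^A is a strictly positive scalar multiple of the vector ξ ∈ ℝ^N with coordinates ξ_i = (θ_i/s_i)^{1/(γ+σ)}, and the gradient of F at x^A is also a strictly positive scalar multiple of ξ. Consequently the unit-norm autarky shadow price vector is p^A = ξ/‖ξ‖₂, with coordinates proportional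 to (θ_i/s_i)^{1/(γ+σ)}. -/
/-!
Both `F` and `g` have the form `x ↦ (∑ i, c i * x i ^ p) ^ q` with `q = 1 / p`, whose `i`-th partial
derivative at a positive point is `(∑ j, c j * x j ^ p) ^ (q - 1) * (c i * x i ^ (p - 1))`; the
outer factor does not depend on `i` and is positive. So it suffices that `c i * x i ^ (p - 1)` is a
positive multiple, uniform in `i`, of `ξ i` (`hasGradientAt_powerMean`). With `K = B Φ^(-γ/(γ+1))`
the closed form of `x^A` gives the multiple `K ^ (1 / γ)` for `g` and `K ^ (-1 / σ)` for `F`.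
-/

/-- Gradient of a weighted power mean at a positive point where the terms `c i * x i ^ (p - 1)`
are proportional to `ξ i`. -/
lemma hasGradientAt_powerMean {N : ℕ} (hN : 1 ≤ N) (p q k : ℝ) (hpq : q * p = 1)
    (hk : 0 < k) (c : Fin N → ℝ) (hc : ∀ i, 0 < c i)
    (H : EuclideanSpace ℝ (Fin N) → ℝ)
    (hH : ∀ x : EuclideanSpace ℝ (Fin N), H x = (∑ i, c i * x i ^ p) ^ q)
    (x ξ : EuclideanSpace ℝ (Fin N)) (hx : ∀ i, 0 < x i)
    (hξ : ∀ i, c i * x i ^ (p - 1) = k * ξ i) :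
    ∃ a : ℝ, 0 < a ∧ HasGradientAt H (a • ξ) x := by
  have : Nonempty (Fin N) := ⟨⟨0, hN⟩⟩
  have hS : 0 < ∑ i, c i * x i ^ p :=
    Finset.sum_pos (fun i _ => mul_pos (hc i) (Real.rpow_pos_of_pos (hx i) p))
      Finset.univ_nonempty
  refine ⟨(∑ i, c i * x i ^ p) ^ (q - 1) * k,
    mul_pos (Real.rpow_pos_of_pos hS _) hk, ?_⟩
  rw [funext hH, hasGradientAt_iff_hasFDerivAt]
  have hcoord : ∀ i : Fin N, HasFDerivAt (fun y : EuclideanSpace ℝ (Fin N) => y i)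
      (EuclideanSpace.proj i : EuclideanSpace ℝ (Fin N) →L[ℝ] ℝ) x :=
    fun i => (EuclideanSpace.proj i : EuclideanSpace ℝ (Fin N) →L[ℝ] ℝ).hasFDerivAt
  have hsum : HasFDerivAt (fun y : EuclideanSpace ℝ (Fin N) => ∑ i, c i * y i ^ p) _ x :=
    HasFDerivAt.fun_sum (u := Finset.univ) fun i _ =>
      ((hcoord i).rpow_const (p := p) (Or.inl (hx i).ne')).const_mul (c i)
  refine (hsum.rpow_const (p := q) (Or.inl hS.ne')).congr_fderiv ?_
  ext v
  simp only [_root_.smul_apply, _root_.sum_apply, smul_eq_mul,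
    PiLp.proj_apply, InnerProductSpace.toDual_apply_apply, PiLp.inner_apply,
    PiLp.smul_apply, RCLike.inner_apply, conj_trivial, Finset.mul_sum]
  refine Finset.sum_congr rfl fun i _ => ?_
  linear_combination
    (∑ i, c i * x i ^ p) ^ (q - 1) * v i * (c i * x i ^ (p - 1) * hpq + hξ i)

/-- Positive rescaling does not change the normalized vector. -/
lemma normalize_pos_smul {N : ℕ} (ξ : EuclideanSpace ℝ (Fin N)) {a : ℝ} (ha : 0 < a) :
    ‖a • ξ‖⁻¹ • (a • ξ) = ‖ξ‖⁻¹ • ξ := by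
  rw [norm_smul, Real.norm_of_nonneg ha.le, smul_smul, mul_inv, mul_right_comm,
    inv_mul_cancel₀ ha.ne', one_mul]

/-- First-order terms of `g` at the autarky allocation. -/
lemma cet_term {σ γ K t s : ℝ} (hσ : 0 < σ) (hγ : 0 < γ) (hK : 0 < K) (ht : 0 < t) (hs : 0 < s) :
    s ^ (-1 / γ) * (K * s ^ (σ / (γ + σ)) * t ^ (γ / (γ + σ))) ^ ((γ + 1) / γ - 1)
      = K ^ (1 / γ) * (t / s) ^ (1 / (γ + σ)) := by
  have h : γ + σ ≠ 0 := by positivity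
  rw [← Real.exp_log hK, ← Real.exp_log ht, ← Real.exp_log hs]
  simp only [← Real.exp_mul, ← Real.exp_add, ← Real.exp_sub]
  congr 1
  field_simp
  ring

/-- First-order terms of `F` at the autarky allocation. -/
lemma ces_term {σ γ K t s : ℝ} (hσ : 0 < σ) (hγ : 0 < γ) (hK : 0 < K) (ht : 0 < t) (hs : 0 < s) :
    t ^ (1 / σ) * (K * s ^ (σ / (γ + σ)) * t ^ (γ / (γ + σ))) ^ ((σ - 1) / σ - 1)
      = K ^ (-1 / σ) * (t / s) ^ (1 / (γ + σ)) := by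
  have h : γ + σ ≠ 0 := by positivity
  rw [← Real.exp_log hK, ← Real.exp_log ht, ← Real.exp_log hs]
  simp only [← Real.exp_mul, ← Real.exp_add, ← Real.exp_sub]
  congr 1
  field_simp
  ring

/-- CES–CET autarky shadow prices.  At the closed-form autarky
allocation `x^A`, the gradients of the CET resource use function `g` and of the
CES production function `F` are both strictly positive scalar multiples of the
vector `ξ` with `ξ_i = (θ_i/s_i)^(1/(γ+σ))`; consequently the unit-norm autarky
shadow price vector is `p^A = ξ/‖ξ‖₂` (the normalized gradients equal `ξ/‖ξ‖₂`). -/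
theorem stmt_17 (N : ℕ) (hN : 1 ≤ N) (σ γ B : ℝ)
    (hσ : 0 < σ) (hσ1 : σ ≠ 1) (hγ : 0 < γ) (hB : 0 < B)
    (θ s : Fin N → ℝ) (hθ : ∀ i, 0 < θ i) (hs : ∀ i, 0 < s i)
    (F g : EuclideanSpace ℝ (Fin N) → ℝ)
    (hF : ∀ x : EuclideanSpace ℝ (Fin N),
      F x = (∑ i, θ i ^ (1 / σ) * x i ^ ((σ - 1) / σ)) ^ (σ / (σ - 1)))
    (hg : ∀ x : EuclideanSpace ℝ (Fin N),
      g x = (∑ i, s i ^ (-1 / γ) * x i ^ ((γ + 1) / γ)) ^ (γ / (γ + 1)))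
    (Φ : ℝ) (hΦ : Φ = ∑ j, s j ^ ((σ - 1) / (γ + σ)) * θ j ^ ((γ + 1) / (γ + σ)))
    (xA : EuclideanSpace ℝ (Fin N))
    (hxA : ∀ i, xA i = B * s i ^ (σ / (γ + σ)) * θ i ^ (γ / (γ + σ)) * Φ ^ (-γ / (γ + 1)))
    (ξ : EuclideanSpace ℝ (Fin N)) (hξ : ∀ i, ξ i = (θ i / s i) ^ (1 / (γ + σ))) :
    ∃ a b : ℝ, 0 < a ∧ 0 < b ∧
      HasGradientAt g (a • ξ) xA ∧ HasGradientAt F (b • ξ) xA ∧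
      ‖a • ξ‖⁻¹ • (a • ξ) = ‖ξ‖⁻¹ • ξ ∧ ‖b • ξ‖⁻¹ • (b • ξ) = ‖ξ‖⁻¹ • ξ := by
  have : Nonempty (Fin N) := ⟨⟨0, hN⟩⟩
  have hΦ0 : 0 < Φ := by
    rw [hΦ]
    exact Finset.sum_pos (fun i _ => mul_pos (Real.rpow_pos_of_pos (hs i) _)
      (Real.rpow_pos_of_pos (hθ i) _)) Finset.univ_nonempty
  have hK : 0 < B * Φ ^ (-γ / (γ + 1)) := mul_pos hB (Real.rpow_pos_of_pos hΦ0 _)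
  have hxK : ∀ i, xA i =
      B * Φ ^ (-γ / (γ + 1)) * s i ^ (σ / (γ + σ)) * θ i ^ (γ / (γ + σ)) := by
    intro i
    rw [hxA i]
    ring
  have hx : ∀ i, 0 < xA i := by
    intro i
    rw [hxK i]
    exact mul_pos (mul_pos hK (Real.rpow_pos_of_pos (hs i) _)) (Real.rpow_pos_of_pos (hθ i) _)
  have hσ1' : σ - 1 ≠ 0 := sub_ne_zero.mpr hσ1
  obtain ⟨a, ha, hga⟩ := hasGradientAt_powerMean hN ((γ + 1) / γ) (γ / (γ + 1)) _
    (by field_simp) (Real.rpow_pos_of_pos hK (1 / γ)) (fun i => s i ^ (-1 / γ))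
    (fun i => Real.rpow_pos_of_pos (hs i) _) g hg xA ξ hx
    (fun i => by rw [hxK i, hξ i]; exact cet_term hσ hγ hK (hθ i) (hs i))
  obtain ⟨b, hb, hFb⟩ := hasGradientAt_powerMean hN ((σ - 1) / σ) (σ / (σ - 1)) _
    (by field_simp) (Real.rpow_pos_of_pos hK (-1 / σ)) (fun i => θ i ^ (1 / σ))
    (fun i => Real.rpow_pos_of_pos (hθ i) _) F hF xA ξ hx
    (fun i => by rw [hxK i, hξ i]; exact ces_term hσ hγ hK (hθ i) (hs i))
  exact ⟨a, b, ha, hb, hga, hFb, normalize_pos_smul ξ ha, normalize_pos_smul ξ hb⟩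
end

section
/- Fix N ≥ 2, real parameters σ > 0 and γ > 0, vectors θ, s ∈ ℝ^N with θ_j > 0 and s_j > 0 for all j, and a budget B > 0. Let Φ(s) = Σ_{j=1}^N s_j^{(σ−1)/(γ+σ)} θ_j^{(γ+1)/(γ+σ)}, let x^A have coordinates x_j^A = B · s_j^{σ/(γ+σ)} θ_j^{γ/(γ+σ)} · Φ(s)^{−γ/(γ+1)}, and define for each i the resource share ω_i(s) = s_i^{−1/γ} (x_i^A)^{(γ+1)/γ} / Σ_{j=1}^N s_j^{−1/γ} (x_j^A)^{(γ+1)/γ}. Then: (a) ω_i(s) = s_i^{(σ−1)/(γ+σ)} θ_i^{(γ+1)/(γ+σ)} / Φ(s); (b) the partial derivative of ω_i with respect to s_i equals ((σ−1)/((γ+σ)·s_i)) · ω_i(s) · (1 − ω_i(s)); and (c) since 0 < ω_i(s) < 1, this partial derivative is strictly positive if σ > 1, zero if σ = 1, and strictly negative if σ < 1: an increase in the skill for a task raises the worker's resource share on that task if and only if tasks are substitutes in production (σ > 1). -/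
/-!
Write `a = (σ - 1) / (γ + σ)` and `τ j = θ j ^ ((γ + 1) / (γ + σ)) > 0`. At a positive skill vector
`v`, the exponents in `v j ^ (-1 / γ) * xA v j ^ ((γ + 1) / γ)` collect to a common factor
(independent of `j`) times `v j ^ a * τ j` (`resource_summand`). The common factor cancels in the
share, so `ω i v = v i ^ a * τ i / Φ v`, which is (a). Since `N ≥ 2`, both `v i ^ a * τ i` and the
remaining part `R` of `Φ v` are positive, whence `0 < ω i v < 1`. As a function of the `i`-th skill
alone, `ω i` is `c ↦ c ^ a * τ i / (c ^ a * τ i + R)` with `R` constant, and the logistic-type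
derivative `a / c * ω * (1 - ω)` follows from the quotient rule (`hasDerivAt_share`). Its sign is
that of `σ - 1`.
-/

/-- The resource cost of a task at the autarky allocation is its `Φ`-summand, up to a factor common
to all tasks. Here `x`, `t`, `P` are the skill, the requirement weight and the value of `Φ`. -/
lemma resource_summand {σ γ B x t P : ℝ} (hσ : 0 < σ) (hγ : 0 < γ) (hB : 0 < B)
    (hx : 0 < x) (ht : 0 < t) (hP : 0 < P) :
    x ^ (-1 / γ) * (B * x ^ (σ / (γ + σ)) * t ^ (γ / (γ + σ)) * P ^ (-γ / (γ + 1))) ^ ((γ + 1) / γ)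
      = B ^ ((γ + 1) / γ) * (P ^ (-γ / (γ + 1))) ^ ((γ + 1) / γ) *
        (x ^ ((σ - 1) / (γ + σ)) * t ^ ((γ + 1) / (γ + σ))) := by
  have hgs : γ + σ ≠ 0 := by positivity
  have e1 : (σ - 1) / (γ + σ) = -1 / γ + σ / (γ + σ) * ((γ + 1) / γ) := by
    field_simp
    ring
  have e2 : (γ + 1) / (γ + σ) = γ / (γ + σ) * ((γ + 1) / γ) := by
    field_simp
  rw [Real.mul_rpow (by positivity) (by positivity), Real.mul_rpow (by positivity) (by positivity),
    Real.mul_rpow (by positivity) (by positivity), e1, e2, Real.rpow_add hx,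
    Real.rpow_mul hx.le, Real.rpow_mul ht.le]
  ring

/-- Derivative of a share with one varying component of power type and a fixed remainder `R`. -/
lemma hasDerivAt_share {a t R x : ℝ} (ht : 0 < t) (hR : 0 < R) (hx : 0 < x) :
    HasDerivAt (fun c : ℝ => c ^ a * t / (c ^ a * t + R))
      (a / x * (x ^ a * t / (x ^ a * t + R)) * (1 - x ^ a * t / (x ^ a * t + R))) x := by
  have hf : HasDerivAt (fun c : ℝ => c ^ a * t) (a * x ^ (a - 1) * t) x :=
    (Real.hasDerivAt_rpow_const (Or.inl hx.ne')).mul_const t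
  have hpos : 0 < x ^ a := Real.rpow_pos_of_pos hx a
  have hD : x ^ a * t + R ≠ 0 := by positivity
  refine (hf.div (hf.add_const R) hD).congr_deriv ?_
  rw [Real.rpow_sub_one hx.ne']
  field_simp

/-- Jevons' paradox for knowledge work.  In the CES–CET model, the
autarky resource share of task `i` is
`ω_i(s) = s_i^((σ−1)/(γ+σ)) θ_i^((γ+1)/(γ+σ)) / Φ(s)`; its partial derivative
with respect to the skill `s_i` equals
`((σ−1)/((γ+σ)·s_i))·ω_i(s)·(1−ω_i(s))`, and since `0 < ω_i(s) < 1` this is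
strictly positive iff `σ > 1`, zero iff `σ = 1`, strictly negative iff `σ < 1`. -/
theorem stmt_19 (N : ℕ) (hN : 2 ≤ N) (σ γ B : ℝ)
    (hσ : 0 < σ) (hγ : 0 < γ) (hB : 0 < B)
    (θ : Fin N → ℝ) (hθ : ∀ j, 0 < θ j)
    (s : Fin N → ℝ) (hs : ∀ j, 0 < s j)
    (Φ : (Fin N → ℝ) → ℝ)
    (hΦ : ∀ v : Fin N → ℝ,
      Φ v = ∑ j, v j ^ ((σ - 1) / (γ + σ)) * θ j ^ ((γ + 1) / (γ + σ)))
    (xA : (Fin N → ℝ) → Fin N → ℝ)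
    (hxA : ∀ v j, xA v j = B * v j ^ (σ / (γ + σ)) * θ j ^ (γ / (γ + σ)) * Φ v ^ (-γ / (γ + 1)))
    (ω : Fin N → (Fin N → ℝ) → ℝ)
    (hω : ∀ i v, ω i v =
      v i ^ (-1 / γ) * xA v i ^ ((γ + 1) / γ) /
        ∑ j, v j ^ (-1 / γ) * xA v j ^ ((γ + 1) / γ)) :
    (∀ i, ω i s = s i ^ ((σ - 1) / (γ + σ)) * θ i ^ ((γ + 1) / (γ + σ)) / Φ s) ∧
    (∀ i, HasDerivAt (fun c : ℝ => ω i (Function.update s i c))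
      ((σ - 1) / ((γ + σ) * s i) * ω i s * (1 - ω i s)) (s i)) ∧
    (∀ i, (0 < ω i s ∧ ω i s < 1) ∧
      (1 < σ → 0 < (σ - 1) / ((γ + σ) * s i) * ω i s * (1 - ω i s)) ∧
      (σ = 1 → (σ - 1) / ((γ + σ) * s i) * ω i s * (1 - ω i s) = 0) ∧
      (σ < 1 → (σ - 1) / ((γ + σ) * s i) * ω i s * (1 - ω i s) < 0)) := by
  have term_pos : ∀ v : Fin N → ℝ, (∀ j, 0 < v j) → ∀ j,
      0 < v j ^ ((σ - 1) / (γ + σ)) * θ j ^ ((γ + 1) / (γ + σ)) := fun v hv j =>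
    mul_pos (Real.rpow_pos_of_pos (hv j) _) (Real.rpow_pos_of_pos (hθ j) _)
  have Φ_pos : ∀ v : Fin N → ℝ, (∀ j, 0 < v j) → 0 < Φ v := fun v hv => by
    rw [hΦ]
    exact Finset.sum_pos (fun j _ => term_pos v hv j) ⟨⟨0, by omega⟩, Finset.mem_univ _⟩
  have share : ∀ v : Fin N → ℝ, (∀ j, 0 < v j) → ∀ i,
      ω i v = v i ^ ((σ - 1) / (γ + σ)) * θ i ^ ((γ + 1) / (γ + σ)) / Φ v := fun v hv i => by
    have hP := Φ_pos v hv
    rw [hω]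
    simp only [hxA, resource_summand hσ hγ hB (hv _) (hθ _) hP]
    rw [← Finset.mul_sum, ← hΦ, mul_div_mul_left _ _ (by positivity)]
  -- `R i` is the part of `Φ` not involving the `i`-th skill.
  obtain ⟨R, hR⟩ : ∃ R : Fin N → ℝ, ∀ i, R i = ∑ j ∈ Finset.univ.erase i,
      s j ^ ((σ - 1) / (γ + σ)) * θ j ^ ((γ + 1) / (γ + σ)) := ⟨_, fun _ => rfl⟩
  have R_pos : ∀ i, 0 < R i := fun i => by
    rw [hR]
    refine Finset.sum_pos (fun j _ => term_pos s hs j) (Finset.card_pos.mp ?_)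
    rw [Finset.card_erase_of_mem (Finset.mem_univ i), Finset.card_univ, Fintype.card_fin]
    omega
  have share_update : ∀ i, ∀ c : ℝ, 0 < c → ω i (Function.update s i c) =
      c ^ ((σ - 1) / (γ + σ)) * θ i ^ ((γ + 1) / (γ + σ)) /
        (c ^ ((σ - 1) / (γ + σ)) * θ i ^ ((γ + 1) / (γ + σ)) + R i) := fun i c hc => by
    have hv : ∀ j, 0 < Function.update s i c j := fun j => by
      rcases eq_or_ne j i with rfl | h
      · simpa using hc
      · simpa [h] using hs j
    rw [share _ hv, hΦ, ← Finset.add_sum_erase _ _ (Finset.mem_univ i), hR,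
      Function.update_self]
    congr 2
    refine Finset.sum_congr rfl fun j hj => ?_
    rw [Function.update_of_ne (Finset.ne_of_mem_erase hj)]
  have share_s : ∀ i, ω i s = s i ^ ((σ - 1) / (γ + σ)) * θ i ^ ((γ + 1) / (γ + σ)) /
      (s i ^ ((σ - 1) / (γ + σ)) * θ i ^ ((γ + 1) / (γ + σ)) + R i) := fun i => by
    simpa using share_update i (s i) (hs i)
  have bounds : ∀ i, 0 < ω i s ∧ ω i s < 1 := fun i => by
    have ht := term_pos s hs i
    have hRi := R_pos i
    rw [share_s]
    exact ⟨by positivity, (div_lt_one (by positivity)).mpr (by linarith)⟩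
  refine ⟨share s hs, fun i => ?_, fun i => ⟨bounds i, fun h => ?_, fun h => ?_, fun h => ?_⟩⟩
  · rw [← div_div, share_s]
    -- The closed form of the share is only valid for positive skills, hence near `s i`.
    refine (hasDerivAt_share (Real.rpow_pos_of_pos (hθ i) _) (R_pos i) (hs i)).congr_of_eventuallyEq
      ?_
    filter_upwards [lt_mem_nhds (hs i)] with c hc using share_update i c hc
  · have hden := mul_pos (add_pos hγ hσ) (hs i)
    exact mul_pos (mul_pos (div_pos (by linarith) hden) (bounds i).1) (by linarith [(bounds i).2])
  · simp [h]
  · have hden := mul_pos (add_pos hγ hσ) (hs i)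
    exact mul_neg_of_neg_of_pos
      (mul_neg_of_neg_of_pos (div_neg_of_neg_of_pos (by linarith) hden) (bounds i).1)
      (by linarith [(bounds i).2])
end
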